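/- Let k ≥ 2 be an integer and define the polynomial Q_k(z) = ((2π)^{2k−1}/(2k)!) ∑_{j=0}^{k} (−1)^j B_{2j} B_{2k−2j} (2^{2j}−1)(2^{2k−2j}−1) C(2k,2j) z^{2j} + ζ(2k−1)(2^{2k−1}−1)((−1)^k z + z^{2k−1}). Then every non-zero complex root of Q_k lies on the unit circle (has absolute value 1), and all roots of Q_k are simple. -/

import Mathlib

/-- `zetaVal m = ∑_{n=1}^∞ n^{−m}`, the value of the Riemann zeta function
at the integer `m`. -/
noncomputable def zetaVal (m : ℕ) : ℝ := ∑' n : ℕ, 1 / ((n : ℝ) + 1) ^ m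

/-- The polynomial
`Q_k(z) = ((2π)^{2k−1}/(2k)!) ∑_{j=0}^{k} (−1)^j B_{2j} B_{2k−2j}
(2^{2j}−1)(2^{2k−2j}−1) C(2k,2j) z^{2j} + ζ(2k−1)(2^{2k−1}−1)((−1)^k z + z^{2k−1})`,
viewed as a polynomial over `ℂ`. -/
noncomputable def Qpoly (k : ℕ) : Polynomial ℂ :=
  Polynomial.C ((((2 * Real.pi) ^ (2 * k - 1) / (Nat.factorial (2 * k))) : ℝ) : ℂ) *
    ∑ j ∈ Finset.range (k + 1),
      Polynomial.C ((-1 : ℂ) ^ j * ((bernoulli (2 * j) : ℚ) : ℂ)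
        * ((bernoulli (2 * k - 2 * j) : ℚ) : ℂ)
        * ((2 : ℂ) ^ (2 * j) - 1) * ((2 : ℂ) ^ (2 * k - 2 * j) - 1)
        * ((Nat.choose (2 * k) (2 * j)) : ℂ)) * Polynomial.X ^ (2 * j)
  + Polynomial.C ((zetaVal (2 * k - 1) : ℂ) * ((2 : ℂ) ^ (2 * k - 1) - 1)) *
      (Polynomial.C ((-1 : ℂ) ^ k) * Polynomial.X + Polynomial.X ^ (2 * k - 1))


noncomputable def LL (s : ℕ) : ℝ := ∑' n : ℕ, 1 / (2 * (n : ℝ) + 1) ^ s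

lemma LL_summable (s : ℕ) (hs : 2 ≤ s) : Summable (fun n : ℕ => 1 / (2 * (n : ℝ) + 1) ^ s) := by
  have h := (Real.summable_one_div_nat_pow (p := s)).2 (by omega)
  have h2 := h.comp_injective (i := fun n : ℕ => 2 * n + 1) (by intro a b; simp)
  refine h2.congr ?_
  intro n; simp

lemma zeta_LL {s : ℕ} (hs : 2 ≤ s) {Z : ℝ} (hZ : HasSum (fun n : ℕ => 1 / (n : ℝ) ^ s) Z) :
    Z * (2 ^ s - 1) = 2 ^ s * LL s := by
  have he : (fun n : ℕ => 1 / ((2 * n : ℕ) : ℝ) ^ s) = fun n : ℕ => (1 / 2 ^ s) * (1 / (n : ℝ) ^ s) := by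
    funext n; push_cast; rw [mul_pow]; field_simp
  have ho : (fun n : ℕ => 1 / ((2 * n + 1 : ℕ) : ℝ) ^ s) = fun n : ℕ => 1 / (2 * (n : ℝ) + 1) ^ s := by
    funext n; push_cast; rfl
  have h := tsum_even_add_odd (f := fun n : ℕ => 1 / (n : ℝ) ^ s)
    (by rw [he]; exact hZ.summable.mul_left _) (by rw [ho]; exact LL_summable s hs)
  rw [he, ho, tsum_mul_left, hZ.tsum_eq] at h
  have : (2 : ℝ) ^ s ≠ 0 := by positivity
  unfold LL
  field_simp at h
  linarith

lemma zetaVal_hasSum {s : ℕ} (hs : 2 ≤ s) : HasSum (fun n : ℕ => 1 / (n : ℝ) ^ s) (zetaVal s) := by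
  have h := (Real.summable_one_div_nat_pow (p := s)).2 (by omega)
  have := h.hasSum
  rw [h.tsum_eq_zero_add] at this
  have h0 : (1 : ℝ) / ((0 : ℕ) : ℝ) ^ s = 0 := by simp; omega
  rw [h0, zero_add] at this
  simpa only [zetaVal, Nat.cast_add, Nat.cast_one] using this

lemma LL_two : LL 2 = Real.pi ^ 2 / 8 := by
  have := zeta_LL le_rfl hasSum_zeta_two
  linarith

lemma LL_four : LL 4 = Real.pi ^ 4 / 96 := by
  have := zeta_LL (by norm_num) hasSum_zeta_four
  linarith

lemma LL_split {s : ℕ} (hs : 2 ≤ s) :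
    LL s = 1 + ∑' n : ℕ, 1 / (2 * (n : ℝ) + 3) ^ s := by
  unfold LL
  rw [(LL_summable s hs).tsum_eq_zero_add]
  congr 1
  · simp
  · congr 1; funext n; push_cast; ring_nf

lemma LL_summable' {s : ℕ} (hs : 2 ≤ s) : Summable (fun n : ℕ => 1 / (2 * (n : ℝ) + 3) ^ s) := by
  have := (summable_nat_add_iff 1).2 (LL_summable s hs)
  refine this.congr ?_
  intro n; push_cast; ring_nf

lemma one_le_LL {s : ℕ} (hs : 2 ≤ s) : 1 ≤ LL s := by
  rw [LL_split hs]
  have : 0 ≤ ∑' n : ℕ, 1 / (2 * (n : ℝ) + 3) ^ s := tsum_nonneg (fun n => by positivity)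
  linarith

lemma LL_decay {s : ℕ} (hs : 2 ≤ s) (t : ℕ) : LL (s + t) - 1 ≤ (LL s - 1) / 3 ^ t := by
  rw [LL_split hs, LL_split (by omega : 2 ≤ s + t)]
  simp only [add_sub_cancel_left]
  rw [← tsum_div_const]
  refine Summable.tsum_le_tsum ?_ (LL_summable' (by omega)) ((LL_summable' hs).div_const _)
  intro n
  rw [pow_add, div_div]
  gcongr
  have : (0 : ℝ) ≤ n := by positivity
  linarith

lemma bern_LL {j : ℕ} (hj : j ≠ 0) : ((bernoulli (2 * j) : ℚ) : ℝ) * (2 ^ (2 * j) - 1) =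
    (-1) ^ (j + 1) * (2 * j).factorial * 2 * LL (2 * j) / Real.pi ^ (2 * j) := by
  have h := zeta_LL (by omega) (hasSum_zeta_nat hj)
  have e : (2 : ℝ) ^ (2 * j) = 2 * 2 ^ (2 * j - 1) := by
    rw [← pow_succ']; congr 1; omega
  have hp : Real.pi ≠ 0 := Real.pi_ne_zero
  have hs : ((-1 : ℝ) ^ (j + 1)) * (-1) ^ (j + 1) = 1 := by
    rw [← mul_pow]; simp
  have hf : ((2 * j).factorial : ℝ) ≠ 0 := by positivity
  have h2 : (2 : ℝ) ^ (2 * j - 1) ≠ 0 := by positivity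
  field_simp at h ⊢
  generalize (2 : ℝ) ^ (2 * j) - 1 = y at *
  rw [e] at h
  have h' : (-1) ^ (j + 1) * Real.pi ^ (2 * j) * (bernoulli (2 * j) : ℝ) * y = 2 * LL (2 * j) * (2 * j).factorial := by
    apply mul_left_cancel₀ h2
    linear_combination h
  linear_combination (-1) ^ (j + 1) * h' - Real.pi ^ (2 * j) * (bernoulli (2 * j) : ℝ) * y * hs

open Polynomial ComplexConjugate in
lemma eval_conj_map (hr : ℝ[X]) (z : ℂ) :
    (hr.map (algebraMap ℝ ℂ)).eval (conj z) = conj ((hr.map (algebraMap ℝ ℂ)).eval z) := by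
  rw [eval_map_algebraMap, eval_map_algebraMap, aeval_conj]

open ComplexConjugate in
lemma factor_le (z r : ℂ) (hz : ‖z‖ ≤ 1) (hr : 1 ≤ ‖r‖) : ‖1 - conj z * r‖ ≤ ‖z - r‖ := by
  have h1 : ‖1 - conj z * r‖ ^ 2 ≤ ‖z - r‖ ^ 2 := by
    have hz2 : ‖z‖ ^ 2 ≤ 1 := pow_le_one₀ (norm_nonneg _) hz
    have hr2 : 1 ≤ ‖r‖ ^ 2 := one_le_pow₀ hr
    rw [← Complex.normSq_eq_norm_sq, Complex.normSq_apply] at hz2 hr2 ⊢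
    rw [← Complex.normSq_eq_norm_sq, Complex.normSq_apply]
    simp
    nlinarith [mul_nonneg (sub_nonneg.2 hz2) (sub_nonneg.2 hr2)]
  exact (sq_le_sq₀ (norm_nonneg _) (norm_nonneg _)).1 h1

lemma re_half (z r : ℂ) (hz : ‖z‖ = 1) (hr : 1 < ‖r‖) : (z * (1 / (z - r))).re ≤ 1 / 2 := by
  have hz2 : ‖z‖ ^ 2 = 1 := by rw [hz]; norm_num
  have hr2 : 1 < ‖r‖ ^ 2 := one_lt_pow₀ hr (by norm_num)
  have hne : z - r ≠ 0 := by
    intro h; rw [sub_eq_zero] at h; rw [h] at hz; linarith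
  have hn : 0 < Complex.normSq (z - r) := Complex.normSq_pos.2 hne
  rw [← Complex.normSq_eq_norm_sq, Complex.normSq_apply] at hz2 hr2
  rw [one_div, Complex.mul_re, Complex.inv_re, Complex.inv_im]
  rw [show z.re * ((z - r).re / Complex.normSq (z - r)) - z.im * (-(z - r).im / Complex.normSq (z - r))
    = (z.re * (z - r).re + z.im * (z - r).im) / Complex.normSq (z - r) by ring]
  rw [div_le_div_iff₀ hn (by norm_num)]
  rw [Complex.normSq_apply]
  simp
  nlinarith

open Polynomial ComplexConjugate in
lemma inner_bound (h : ℂ[X]) (h0 : h ≠ 0) (hroots : ∀ z, h.eval z = 0 → 1 < ‖z‖) (z : ℂ)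
    (hz0 : z ≠ 0) (hz : ‖z‖ ≤ 1) :
    ‖z‖ ^ h.natDegree * ‖h.eval ((conj z)⁻¹)‖ ≤ ‖h.eval z‖ := by
  have hs := IsAlgClosed.splits h
  have key : ∀ m : Multiset ℂ, (∀ r ∈ m, 1 < ‖r‖) →
      ‖z‖ ^ m.card * ‖(m.map (fun r => (conj z)⁻¹ - r)).prod‖ ≤ ‖(m.map (fun r => z - r)).prod‖ := by
    intro m
    induction m using Multiset.induction_on with
    | empty => simp
    | cons a m ih =>
      intro hm
      have ih' := ih (fun r hr => hm r (Multiset.mem_cons_of_mem hr))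
      have ha := hm a (Multiset.mem_cons_self a m)
      have hf : ‖z‖ * ‖(conj z)⁻¹ - a‖ ≤ ‖z - a‖ := by
        have hc : conj z ≠ 0 := by simpa using hz0
        rw [← Complex.norm_conj z, ← norm_mul, mul_sub, mul_inv_cancel₀ hc]
        exact factor_le z a hz ha.le
      simp only [Multiset.map_cons, Multiset.prod_cons, Multiset.card_cons, norm_mul, pow_succ]
      calc _ = (‖z‖ * ‖(conj z)⁻¹ - a‖) * (‖z‖ ^ m.card * ‖(m.map (fun r => (conj z)⁻¹ - r)).prod‖) := by ring
        _ ≤ _ := by gcongr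
  have hk := key h.roots (fun r hr => hroots r ((mem_roots h0).1 hr))
  rw [hs.eval_eq_prod_roots, hs.eval_eq_prod_roots z, norm_mul, norm_mul, hs.natDegree_eq_card_roots]
  nlinarith [norm_nonneg h.leadingCoeff, mul_le_mul_of_nonneg_left hk (norm_nonneg h.leadingCoeff)]

open Polynomial ComplexConjugate in
lemma re_log_deriv (h : ℂ[X]) (h0 : h ≠ 0) (hroots : ∀ z, h.eval z = 0 → 1 < ‖z‖) (z : ℂ)
    (hz : ‖z‖ = 1) : (z * h.derivative.eval z / h.eval z).re ≤ h.natDegree / 2 := by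
  have hs := IsAlgClosed.splits h
  have hne : h.eval z ≠ 0 := fun e => by have := hroots z e; linarith
  rw [mul_div_assoc, hs.eval_derivative_div_eval_of_ne_zero hne, hs.natDegree_eq_card_roots]
  have key : ∀ m : Multiset ℂ, (∀ r ∈ m, 1 < ‖r‖) →
      (z * (m.map (fun r => 1 / (z - r))).sum).re ≤ (m.card : ℝ) / 2 := by
    intro m
    induction m using Multiset.induction_on with
    | empty => simp
    | cons a m ih =>
      intro hm
      have ih' := ih (fun r hr => hm r (Multiset.mem_cons_of_mem hr))
      have ha := re_half z a hz (hm a (Multiset.mem_cons_self a m))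
      simp only [Multiset.map_cons, Multiset.sum_cons, Multiset.card_cons, mul_add, Complex.add_re]
      push_cast
      linarith
  exact key h.roots (fun r hr => hroots r ((mem_roots h0).1 hr))

open Polynomial ComplexConjugate in
lemma core (hr : ℝ[X]) (N : ℕ) (hN : hr.natDegree < N) (s : ℂ) (hs : s = 1 ∨ s = -1)
    (hroots : ∀ z : ℂ, (hr.map (algebraMap ℝ ℂ)).eval z = 0 → 1 < ‖z‖)
    (Q M V : ℂ[X]) (hV : ∀ z, z ≠ 0 → V.eval z ≠ 0)
    (hQ : ∀ z, z ≠ 0 → M.eval z * Q.eval z = V.eval z *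
      ((hr.map (algebraMap ℝ ℂ)).eval z + s * (z ^ N * (hr.map (algebraMap ℝ ℂ)).eval z⁻¹)))
    (z : ℂ) (hz0 : z ≠ 0) (hz : Q.eval z = 0) : ‖z‖ = 1 ∧ Q.derivative.eval z ≠ 0 := by
  have hconj := eval_conj_map hr
  have hconj' := eval_conj_map (derivative hr)
  rw [← derivative_map] at hconj'
  have hdeg : (hr.map (algebraMap ℝ ℂ)).natDegree < N := by
    rwa [natDegree_map]
  set h := hr.map (algebraMap ℝ ℂ) with hh
  have h0 : h ≠ 0 := by
    intro e; have := hroots 0 (by simp [e]); simp at this; linarith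
  have hs1 : ‖s‖ = 1 := by rcases hs with rfl | rfl <;> simp
  -- no zeros inside
  have inside : ∀ w : ℂ, w ≠ 0 → ‖w‖ < 1 → ‖w ^ N * h.eval w⁻¹‖ < ‖h.eval w‖ := by
    intro w hw0 hw
    have hb := inner_bound h h0 hroots w hw0 hw.le
    have hpos : 0 < ‖h.eval w‖ := norm_pos_iff.2 (fun e => by have := hroots w e; linarith)
    rw [← map_inv₀, hconj, Complex.norm_conj] at hb
    have hwp : 0 < ‖w‖ := norm_pos_iff.2 hw0
    rw [norm_mul, norm_pow]
    obtain ⟨d, hd⟩ := Nat.exists_eq_add_of_lt hdeg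
    have : ‖w‖ ^ N = ‖w‖ ^ (d + 1) * ‖w‖ ^ h.natDegree := by rw [← pow_add]; congr 1; omega
    rw [this, mul_assoc]
    have h1 : ‖w‖ ^ (d + 1) < 1 := pow_lt_one₀ hwp.le hw (by omega)
    calc _ ≤ ‖w‖ ^ (d + 1) * ‖h.eval w‖ := by gcongr
      _ < 1 * ‖h.eval w‖ := by gcongr
      _ = _ := one_mul _
  have hR : h.eval z + s * (z ^ N * h.eval z⁻¹) = 0 := by
    have := hQ z hz0
    rw [hz, mul_zero] at this
    exact (mul_eq_zero.1 this.symm).resolve_left (hV z hz0)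
  have hnorm : ‖h.eval z‖ = ‖z ^ N * h.eval z⁻¹‖ := by
    rw [eq_neg_of_add_eq_zero_left hR, norm_neg, norm_mul, hs1, one_mul]
  have hz1 : ‖z‖ = 1 := by
    rcases lt_trichotomy ‖z‖ 1 with hlt | he | hgt
    · have := inside z hz0 hlt; linarith
    · exact he
    · exfalso
      have := inside z⁻¹ (inv_ne_zero hz0) (by rw [norm_inv]; exact inv_lt_one_of_one_lt₀ hgt)
      rw [inv_inv, norm_mul, hnorm, norm_mul, norm_pow, norm_pow, norm_inv, ← mul_assoc, ← mul_pow,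
        inv_mul_cancel₀ (by positivity)] at this
      simp at this
  refine ⟨hz1, ?_⟩
  intro hd
  have hlhs : HasDerivAt (fun w => M.eval w * Q.eval w) 0 z := by
    have := (M.hasDerivAt z).mul (Q.hasDerivAt z)
    rw [hz, hd] at this
    simp only [mul_zero, add_zero] at this
    exact this
  have hrhs := (V.hasDerivAt z).mul ((h.hasDerivAt z).add
    (((((hasDerivAt_id z).pow N).mul ((h.hasDerivAt z⁻¹).comp z (hasDerivAt_inv hz0)))).const_mul s))
  have heq : (fun w => M.eval w * Q.eval w) =ᶠ[nhds z] fun w => V.eval w *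
      (h.eval w + s * (w ^ N * h.eval w⁻¹)) := by
    filter_upwards [isOpen_ne.mem_nhds hz0] with w hw using hQ w hw
  have huniq := (hlhs.congr_of_eventuallyEq heq.symm).unique hrhs
  have hzinv : z⁻¹ = conj z := by
    rw [Complex.inv_def, Complex.normSq_eq_norm_sq, hz1]; simp
  have hD : (derivative h).eval z + s * (N * z ^ (N - 1) * h.eval z⁻¹ +
      z ^ N * ((derivative h).eval z⁻¹ * (-(z ^ 2)⁻¹))) = 0 := by
    have h2 := huniq.symm
    simp only [Pi.add_apply, Pi.mul_apply, Pi.pow_apply, id, Function.comp] at h2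
    rw [hR, mul_zero, zero_add] at h2
    have h3 := (mul_eq_zero.1 h2).resolve_left (hV z hz0)
    rw [← h3]; ring
  have hA : h.eval z ≠ 0 := fun e => by have := hroots z e; linarith
  have hre := re_log_deriv h h0 hroots z hz1
  have hNz : z ^ N = z * z ^ (N - 1) := by rw [← pow_succ']; congr 1; omega
  have e2 : s * z ^ N * conj (h.eval z) = - h.eval z := by
    rw [← hconj, ← hzinv]; linear_combination hR
  have e3 : z * (derivative h).eval z - N * h.eval z
      + s * z ^ N * (- conj (z * (derivative h).eval z)) = 0 := by
    rw [map_mul, ← hconj', ← hzinv]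
    have := congrArg (fun x => z * x) hD
    simp only [mul_zero] at this
    rw [← this]
    have hx : (N : ℂ) * h.eval z = -(N * (s * z ^ N * h.eval z⁻¹)) := by linear_combination N * hR
    rw [hx, hNz]
    field_simp
    ring
  set A := h.eval z
  set D := z * (derivative h).eval z
  have hcA : conj A ≠ 0 := by simpa using hA
  have e4 : D / A + conj (D / A) = N := by
    rw [map_div₀]
    field_simp
    have : conj A * (D - N * A + s * z ^ N * (- conj D)) = 0 := by rw [e3, mul_zero]
    linear_combination this + conj D * e2
  have e5 := congrArg Complex.re e4
  rw [Complex.add_re, Complex.conj_re, Complex.natCast_re] at e5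
  have : (h.natDegree : ℝ) < N := by exact_mod_cast hdeg
  linarith

noncomputable def AA (k j : ℕ) : ℝ := if j = 0 ∨ k ≤ j then 0 else LL (2 * j) * LL (2 * k - 2 * j)

lemma AA_symm (k j : ℕ) (h : j ≤ k) : AA k (k - j) = AA k j := by
  unfold AA
  by_cases h1 : j = 0 ∨ k ≤ j
  · rw [if_pos h1, if_pos (by omega)]
  · rw [if_neg h1, if_neg (by omega), mul_comm]
    rw [show 2 * k - 2 * (k - j) = 2 * j by omega, show 2 * (k - j) = 2 * k - 2 * j by omega]

lemma term_eq (k j : ℕ) (hk : 2 ≤ k) (hj : j ≤ k) :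
    (2 * Real.pi) ^ (2 * k - 1) / (Nat.factorial (2 * k)) * ((-1 : ℝ) ^ j * ((bernoulli (2 * j) : ℚ) : ℝ)
        * ((bernoulli (2 * k - 2 * j) : ℚ) : ℝ)
        * ((2 : ℝ) ^ (2 * j) - 1) * ((2 : ℝ) ^ (2 * k - 2 * j) - 1)
        * ((Nat.choose (2 * k) (2 * j)) : ℝ)) =
    (-1) ^ k * 2 ^ (2 * k - 1) * (4 / Real.pi * ((-1) ^ j * AA k j)) := by
  unfold AA
  by_cases h1 : j = 0 ∨ k ≤ j
  · rw [if_pos h1]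
    rcases h1 with rfl | h1
    · simp
    · have : j = k := by omega
      subst this; simp
  · rw [if_neg h1]
    push Not at h1
    obtain ⟨i, rfl⟩ := Nat.exists_eq_add_of_lt h1.2
    have e1 : 2 * (j + i + 1) - 2 * j = 2 * (i + 1) := by omega
    have e2 : 2 * (j + i + 1) - 1 = 2 * j + 2 * i + 1 := by omega
    have b1 := bern_LL h1.1
    have b2 := bern_LL (Nat.succ_ne_zero i)
    rw [Nat.succ_eq_add_one] at b2
    have hc := Nat.choose_mul_factorial_mul_factorial (n := 2 * (j + i + 1)) (k := 2 * j) (by omega)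
    rw [e1] at hc
    rw [e1, e2]
    have hc' : ((2 * (j + i + 1)).choose (2 * j) : ℝ) * (2 * j).factorial * (2 * (i + 1)).factorial
      = (2 * (j + i + 1)).factorial := by exact_mod_cast hc
    have hp : Real.pi ≠ 0 := Real.pi_ne_zero
    have hf : ((2 * (j + i + 1)).factorial : ℝ) ≠ 0 := by positivity
    have hj2 : ((-1 : ℝ) ^ j) * (-1) ^ j = 1 := by rw [← mul_pow]; simp
    calc _ = (2 * Real.pi) ^ (2 * j + 2 * i + 1) / ((2 * (j + i + 1)).factorial) * (-1) ^ j *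
          (((bernoulli (2 * j) : ℚ) : ℝ) * (2 ^ (2 * j) - 1)) *
          (((bernoulli (2 * (i + 1)) : ℚ) : ℝ) * (2 ^ (2 * (i + 1)) - 1)) *
          ((2 * (j + i + 1)).choose (2 * j) : ℝ) := by ring
      _ = _ := by
        rw [b1, b2, ← hc']
        rw [← hc'] at hf
        have hf1 : ((2 * j).factorial : ℝ) ≠ 0 := by positivity
        have hf2 : ((2 * (i + 1)).factorial : ℝ) ≠ 0 := by positivity
        have hf3 : ((2 * (j + i + 1)).choose (2 * j) : ℝ) ≠ 0 := by
          intro h; rw [h] at hf; simp at hf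
        generalize ((2 * (j + i + 1)).choose (2 * j) : ℝ) = c at *
        generalize ((2 * j).factorial : ℝ) = f1 at *
        generalize ((2 * (i + 1)).factorial : ℝ) = f2 at *
        rw [mul_pow]
        field_simp
        ring_nf

lemma Q_eval (k : ℕ) (hk : 2 ≤ k) (z : ℂ) : (Qpoly k).eval z =
    ((-1) ^ k * 2 ^ (2 * k - 1)) * ((LL (2 * k - 1) : ℂ) * (z + (-1) ^ k * z ^ (2 * k - 1)) +
      ((4 / Real.pi : ℝ) : ℂ) * ∑ j ∈ Finset.range (k + 1), ((-1) ^ j * (AA k j : ℂ)) * z ^ (2 * j)) := by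
  have hz := zeta_LL (s := 2 * k - 1) (by omega) (zetaVal_hasSum (by omega))
  have hz' : (zetaVal (2 * k - 1) : ℂ) * ((2 : ℂ) ^ (2 * k - 1) - 1) = 2 ^ (2 * k - 1) * (LL (2 * k - 1) : ℂ) := by
    exact_mod_cast hz
  have hkk : ((-1 : ℂ) ^ k) * (-1) ^ k = 1 := by rw [← mul_pow]; simp
  unfold Qpoly
  rw [hz']
  simp only [Polynomial.eval_add, Polynomial.eval_mul, Polynomial.eval_C, Polynomial.eval_finsetSum,
    Polynomial.eval_pow, Polynomial.eval_X]
  have S : (((2 * Real.pi) ^ (2 * k - 1) / (Nat.factorial (2 * k)) : ℝ) : ℂ) *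
      ∑ j ∈ Finset.range (k + 1), ((-1 : ℂ) ^ j * ((bernoulli (2 * j) : ℚ) : ℂ)
        * ((bernoulli (2 * k - 2 * j) : ℚ) : ℂ)
        * ((2 : ℂ) ^ (2 * j) - 1) * ((2 : ℂ) ^ (2 * k - 2 * j) - 1)
        * ((Nat.choose (2 * k) (2 * j)) : ℂ)) * z ^ (2 * j) =
      ((-1) ^ k * 2 ^ (2 * k - 1)) * (((4 / Real.pi : ℝ) : ℂ) *
        ∑ j ∈ Finset.range (k + 1), ((-1) ^ j * (AA k j : ℂ)) * z ^ (2 * j)) := by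
    rw [Finset.mul_sum, Finset.mul_sum, Finset.mul_sum]
    refine Finset.sum_congr rfl ?_
    intro j hj
    have ht := term_eq k j hk (by simpa [Nat.lt_succ_iff] using hj)
    have ht' := congrArg (fun x : ℝ => (x : ℂ)) ht
    push_cast at ht' ⊢
    linear_combination z ^ (2 * j) * ht'
  rw [S]
  linear_combination (- 2 ^ (2 * k - 1) * (LL (2 * k - 1) : ℂ) * z ^ (2 * k - 1)) * hkk

open Polynomial in
lemma Q_deriv_zero (k : ℕ) (hk : 2 ≤ k) : (Qpoly k).derivative.eval 0 ≠ 0 := by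
  have hz := zeta_LL (s := 2 * k - 1) (by omega) (zetaVal_hasSum (by omega))
  have hz' : (zetaVal (2 * k - 1) : ℂ) * ((2 : ℂ) ^ (2 * k - 1) - 1) = 2 ^ (2 * k - 1) * (LL (2 * k - 1) : ℂ) := by
    exact_mod_cast hz
  have hL := one_le_LL (s := 2 * k - 1) (by omega)
  have hL' : (LL (2 * k - 1) : ℂ) ≠ 0 := by
    exact_mod_cast (by linarith : (0 : ℝ) < LL (2 * k - 1)).ne'
  rw [← coeff_zero_eq_eval_zero, coeff_derivative]
  unfold Qpoly
  rw [hz']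
  simp only [coeff_add, coeff_C_mul, finsetSum_coeff, coeff_X_pow, zero_add, coeff_X_one]
  rw [Finset.sum_eq_zero (fun j _ => by rw [if_neg (by omega)]; simp), if_neg (by omega)]
  simp [hL']

noncomputable def ee (k i : ℕ) : ℝ :=
  if 2 * i + 1 < k then (-1) ^ (i + 1) * (AA k (i + 1) - AA k i) else 0

open Polynomial in
noncomputable def hh (k : ℕ) : ℝ[X] :=
  C (LL (2 * k - 1)) * (1 + X ^ 2) +
    C (4 / Real.pi) * ∑ i ∈ Finset.range k, C (ee k i) * X ^ (2 * i + 1)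

open Polynomial in
lemma hh_eval (k : ℕ) (z : ℂ) : ((hh k).map (algebraMap ℝ ℂ)).eval z =
    (LL (2 * k - 1) : ℂ) * (1 + z ^ 2) +
      ((4 / Real.pi : ℝ) : ℂ) * ∑ i ∈ Finset.range k, (ee k i : ℂ) * z ^ (2 * i + 1) := by
  rw [eval_map_algebraMap]
  simp [hh]

open Polynomial in
lemma hh_deg (k : ℕ) (hk : 2 ≤ k) : (hh k).natDegree < 2 * k := by
  refine lt_of_le_of_lt (b := 2 * k - 1) ?_ (by omega)
  unfold hh
  refine natDegree_add_le_of_degree_le ?_ ?_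
  · refine (natDegree_C_mul_le _ _).trans ?_
    refine natDegree_add_le_of_degree_le (by simp) ?_
    rw [natDegree_X_pow]; omega
  · refine (natDegree_C_mul_le _ _).trans ?_
    refine natDegree_sum_le_of_forall_le _ _ ?_
    intro i hi
    refine (natDegree_C_mul_X_pow_le _ _).trans ?_
    have := Finset.mem_range.1 hi
    omega

lemma ee_rel (k i : ℕ) (hi : i < k) :
    (-1) ^ (i + 1) * (AA k (i + 1) - AA k i) = ee k i + (-1) ^ k * ee k (k - 1 - i) := by
  unfold ee
  rcases lt_trichotomy (2 * i + 1) k with h | h | h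
  · rw [if_pos h, if_neg (by omega)]; ring
  · rw [if_neg (by omega), if_neg (by omega)]
    have := AA_symm k i hi.le
    rw [show k - i = i + 1 by omega] at this
    rw [this]; ring
  · rw [if_neg (by omega), if_pos (by omega)]
    have h1 := AA_symm k i hi.le
    have h2 := AA_symm k (i + 1) hi
    rw [show k - 1 - i + 1 = k - i by omega, h1, show k - 1 - i = k - (i + 1) by omega, h2]
    obtain ⟨m, rfl⟩ := Nat.exists_eq_add_of_lt hi
    have e : i + m + 1 - i = m + 1 := by omega
    rw [e]
    have hm : ((-1 : ℝ) ^ m) * (-1) ^ m = 1 := by rw [← mul_pow]; simp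
    have e2 : (-1 : ℝ) ^ (i + m + 1) = (-1) ^ i * (-1) ^ m * (-1) := by ring
    rw [e2, pow_succ, pow_succ]
    linear_combination (-(AA (i + m + 1) i - AA (i + m + 1) (i + 1)) * (-1) ^ i) * hm

lemma main_rel (k : ℕ) (hk : 2 ≤ k) (z : ℂ) (hz : z ≠ 0) :
    (1 + z ^ 2) * (Qpoly k).eval z = ((-1) ^ k * 2 ^ (2 * k - 1)) * z *
      (((hh k).map (algebraMap ℝ ℂ)).eval z + (-1) ^ k * (z ^ (2 * k) *
        ((hh k).map (algebraMap ℝ ℂ)).eval z⁻¹)) := by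
  rw [Q_eval k hk, hh_eval, hh_eval]
  have A0 : AA k 0 = 0 := by simp [AA]
  have Ak : AA k k = 0 := by simp [AA]
  have s1 : ∑ j ∈ Finset.range (k + 1), ((-1) ^ j * (AA k j : ℂ)) * z ^ (2 * j) =
      ∑ i ∈ Finset.range k, ((-1) ^ (i + 1) * (AA k (i + 1) : ℂ)) * z ^ (2 * i + 2) := by
    rw [Finset.sum_range_succ', A0]; simp [mul_add]
  have s2 : ∑ j ∈ Finset.range (k + 1), ((-1) ^ j * (AA k j : ℂ)) * z ^ (2 * j) =
      ∑ i ∈ Finset.range k, ((-1) ^ i * (AA k i : ℂ)) * z ^ (2 * i) := by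
    rw [Finset.sum_range_succ, Ak]; simp
  have s3 : (1 + z ^ 2) * ∑ j ∈ Finset.range (k + 1), ((-1) ^ j * (AA k j : ℂ)) * z ^ (2 * j) =
      ∑ i ∈ Finset.range k, ((ee k i : ℂ) * z ^ (2 * i + 2) +
        (-1) ^ k * ((ee k (k - 1 - i) : ℂ) * z ^ (2 * i + 2))) := by
    rw [add_mul, one_mul]
    nth_rewrite 1 [s1]
    rw [s2, Finset.mul_sum, ← Finset.sum_add_distrib]
    refine Finset.sum_congr rfl ?_
    intro i hi
    have h := congrArg (fun x : ℝ => (x : ℂ)) (ee_rel k i (Finset.mem_range.1 hi))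
    push_cast at h
    linear_combination z ^ (2 * i + 2) * h
  have s4 : ∑ i ∈ Finset.range k, (ee k (k - 1 - i) : ℂ) * z ^ (2 * i + 2) =
      z * z ^ (2 * k) * ∑ i ∈ Finset.range k, (ee k i : ℂ) * z⁻¹ ^ (2 * i + 1) := by
    rw [← Finset.sum_range_reflect, Finset.mul_sum]
    refine Finset.sum_congr rfl ?_
    intro i hi
    have hi := Finset.mem_range.1 hi
    rw [show k - 1 - (k - 1 - i) = i by omega, show 2 * (k - 1 - i) + 2 = 2 * k - 2 * i by omega]
    have : z ^ (2 * k) = z ^ (2 * k - 2 * i) * z ^ (2 * i) := by rw [← pow_add]; congr 1; omega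
    rw [this, inv_pow]
    field_simp
    ring
  rw [Finset.sum_add_distrib, ← Finset.mul_sum, s4] at s3
  have s5 : ∑ i ∈ Finset.range k, (ee k i : ℂ) * z ^ (2 * i + 2) =
      z * ∑ i ∈ Finset.range k, (ee k i : ℂ) * z ^ (2 * i + 1) := by
    rw [Finset.mul_sum]
    refine Finset.sum_congr rfl ?_
    intro i hi; ring
  rw [s5] at s3
  have e : z ^ (2 * k) * (1 + z⁻¹ ^ 2) = z ^ (2 * k) + z ^ (2 * k - 2) := by
    have : z ^ (2 * k) = z ^ (2 * k - 2) * z ^ 2 := by rw [← pow_add]; congr 1; omega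
    rw [this]; field_simp
  have e1 : z ^ (2 * k - 1) = z * z ^ (2 * k - 2) := by rw [← pow_succ']; congr 1; omega
  have e2 : z ^ (2 * k) = z ^ 2 * z ^ (2 * k - 2) := by rw [← pow_add]; congr 1; omega
  rw [e1]
  generalize (∑ j ∈ Finset.range (k + 1), ((-1) ^ j * (AA k j : ℂ)) * z ^ (2 * j)) = S at *
  generalize (∑ i ∈ Finset.range k, (ee k i : ℂ) * z ^ (2 * i + 1)) = S1 at *
  generalize (∑ i ∈ Finset.range k, (ee k i : ℂ) * z⁻¹ ^ (2 * i + 1)) = S2 at *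
  linear_combination ((-1) ^ k * 2 ^ (2 * k - 1)) * ((4 / Real.pi : ℝ) : ℂ) * s3 -
    ((-1) ^ k * 2 ^ (2 * k - 1)) * z * (LL (2 * k - 1) : ℂ) * (-1) ^ k * (e + e2)

lemma LL4_bd : 1.0145 ≤ LL 4 ∧ LL 4 ≤ 1.0147 := by
  rw [LL_four]
  have h1 := Real.pi_gt_d4
  have h2 := Real.pi_lt_d4
  have a1 : (3.1415 : ℝ) ^ 4 ≤ Real.pi ^ 4 := by gcongr
  have a2 : Real.pi ^ 4 ≤ (3.1416 : ℝ) ^ 4 := by gcongr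
  norm_num at a1 a2 ⊢
  constructor <;> linarith

lemma LL_bd (m s : ℕ) (h : 2 * m + 4 ≤ s) : LL s ≤ 1 + 0.0147 * (1 / 9) ^ m := by
  obtain ⟨t, rfl⟩ := Nat.exists_eq_add_of_le h
  have h1 := LL_decay (s := 4) (by norm_num) (2 * m + t)
  rw [show 4 + (2 * m + t) = 2 * m + 4 + t by ring] at h1
  have h2 : (LL 4 - 1) / 3 ^ (2 * m + t) ≤ 0.0147 / 3 ^ (2 * m) := by
    have := LL4_bd
    gcongr
    · linarith
    · norm_num
    · omega
  have h3 : (0.0147 : ℝ) / 3 ^ (2 * m) = 0.0147 * (1 / 9) ^ m := by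
    rw [pow_mul, one_div, inv_pow]; norm_num [div_eq_mul_inv]
  linarith

lemma ee_bd (k i : ℕ) : |ee k (i + 2)| ≤ 0.03 * (1 / 9) ^ i := by
  unfold ee
  split_ifs with h
  · rw [abs_mul, abs_pow, abs_neg, abs_one, one_pow, one_mul]
    unfold AA
    rw [if_neg (by omega), if_neg (by omega)]
    have a1 := LL_bd i (2 * (i + 2 + 1)) (by omega)
    have a2 := LL_bd i (2 * k - 2 * (i + 2 + 1)) (by omega)
    have a3 := LL_bd i (2 * (i + 2)) (by omega)
    have a4 := LL_bd i (2 * k - 2 * (i + 2)) (by omega)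
    have b1 := one_le_LL (s := 2 * (i + 2 + 1)) (by omega)
    have b2 := one_le_LL (s := 2 * k - 2 * (i + 2 + 1)) (by omega)
    have b3 := one_le_LL (s := 2 * (i + 2)) (by omega)
    have b4 := one_le_LL (s := 2 * k - 2 * (i + 2)) (by omega)
    have hd0 : (0 : ℝ) < (1 / 9) ^ i := by positivity
    have hd1 : ((1 : ℝ) / 9) ^ i ≤ 1 := pow_le_one₀ (by norm_num) (by norm_num)
    generalize ((1 : ℝ) / 9) ^ i = d at *
    have c : ∀ x y : ℝ, 1 ≤ x → 1 ≤ y → x ≤ 1 + 0.0147 * d → y ≤ 1 + 0.0147 * d →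
        1 ≤ x * y ∧ x * y ≤ 1 + 0.03 * d := by
      intro x y hx hy hx' hy'
      refine ⟨one_le_mul_of_one_le_of_one_le hx hy, ?_⟩
      calc x * y ≤ (1 + 0.0147 * d) * (1 + 0.0147 * d) := by gcongr
        _ ≤ _ := by nlinarith
    have c1 := c _ _ b1 b2 a1 a2
    have c2 := c _ _ b3 b4 a3 a4
    rw [abs_le]; constructor <;> linarith
  · rw [abs_zero]; positivity

lemma geo (m : ℕ) : ∑ i ∈ Finset.range m, (0.03 : ℝ) * (1 / 9) ^ i ≤ 0.034 := by
  have : ∀ m : ℕ, ∑ i ∈ Finset.range m, (0.03 : ℝ) * (1 / 9) ^ i = 0.03375 * (1 - (1 / 9) ^ m) := by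
    intro m
    induction m with
    | zero => simp
    | succ n ih => rw [Finset.sum_range_succ, ih, pow_succ]; ring
  rw [this]
  have : (0 : ℝ) < (1 / 9) ^ m := by positivity
  linarith

lemma pi_inv_bd : 1.273 ≤ 4 / Real.pi ∧ 4 / Real.pi ≤ 1.2734 := by
  have h1 := Real.pi_gt_d4
  have h2 := Real.pi_lt_d4
  constructor
  · rw [le_div_iff₀ (by positivity)]; linarith
  · rw [div_le_iff₀ (by positivity)]; linarith

lemma ee0_bd (k : ℕ) (hk : 4 ≤ k) : |4 / Real.pi * ee k 0 + 1.57| ≤ 0.004 := by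
  have e : ee k 0 = -(Real.pi ^ 2 / 8 * LL (2 * k - 2)) := by
    unfold ee AA
    rw [if_pos (by omega), if_neg (by omega), if_pos (by simp)]
    simp [LL_two]
  have h1 := Real.pi_gt_d4
  have h2 := Real.pi_lt_d4
  have a := LL_bd 1 (2 * k - 2) (by omega)
  have b := one_le_LL (s := 2 * k - 2) (by omega)
  have : 4 / Real.pi * ee k 0 = -(Real.pi / 2 * LL (2 * k - 2)) := by
    rw [e]; have := Real.pi_ne_zero; field_simp; norm_num
  rw [this, abs_le]
  norm_num at a h1 h2 ⊢
  constructor <;> nlinarith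

lemma ee1_bd (k : ℕ) (hk : 4 ≤ k) : |4 / Real.pi * ee k 1 + 0.27| ≤ 0.013 := by
  have e : ee k 1 = LL 4 * LL (2 * k - 4) - Real.pi ^ 2 / 8 * LL (2 * k - 2) := by
    unfold ee AA
    rw [if_pos (by omega), if_neg (by omega), if_neg (by omega)]
    simp [LL_two]
  have h1 := Real.pi_gt_d4
  have h2 := Real.pi_lt_d4
  have a := LL_bd 1 (2 * k - 2) (by omega)
  have b := one_le_LL (s := 2 * k - 2) (by omega)
  have a' := LL_bd 0 (2 * k - 4) (by omega)
  have b' := one_le_LL (s := 2 * k - 4) (by omega)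
  obtain ⟨c1, c2⟩ := LL4_bd
  obtain ⟨p1, p2⟩ := pi_inv_bd
  have q1 : 1.2336 ≤ Real.pi ^ 2 / 8 := by nlinarith
  have q2 : Real.pi ^ 2 / 8 ≤ 1.2338 := by nlinarith
  norm_num at a a'
  have r1 : LL 4 * LL (2 * k - 4) ≤ 1.0147 * 1.0147 := by
    gcongr; linarith
  have r2 : 1.0145 * 1 ≤ LL 4 * LL (2 * k - 4) := by gcongr
  have r3 : Real.pi ^ 2 / 8 * LL (2 * k - 2) ≤ 1.2338 * 1.00164 := by
    gcongr; linarith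
  have r4 : 1.2336 * 1 ≤ Real.pi ^ 2 / 8 * LL (2 * k - 2) := by gcongr
  have u1 : ee k 1 ≤ -0.2039 := by rw [e]; linarith
  have u2 : -0.2214 ≤ ee k 1 := by rw [e]; linarith
  rw [abs_le]
  constructor <;> nlinarith

lemma hh_nonzero (k : ℕ) (hk : 4 ≤ k) (z : ℂ) (hz : ‖z‖ ≤ 1) :
    ((hh k).map (algebraMap ℝ ℂ)).eval z ≠ 0 := by
  intro h0
  rw [hh_eval] at h0
  obtain ⟨m, rfl⟩ := Nat.exists_eq_add_of_le' (by omega : 2 ≤ k)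
  rw [Finset.sum_range_succ', Finset.sum_range_succ'] at h0
  set k := m + 2
  have hp : ∀ n : ℕ, ‖z ^ n‖ ≤ 1 := fun n => by
    rw [norm_pow]; exact pow_le_one₀ (norm_nonneg _) hz
  have tail : ‖∑ i ∈ Finset.range m, (ee k (i + 1 + 1) : ℂ) * z ^ (2 * (i + 1 + 1) + 1)‖ ≤ 0.034 := by
    refine (norm_sum_le _ _).trans (le_trans (Finset.sum_le_sum ?_) (geo m))
    intro i _
    rw [norm_mul, Complex.norm_real, Real.norm_eq_abs]
    have := ee_bd k i
    calc _ ≤ |ee k (i + 2)| * 1 := by gcongr; exact hp _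
      _ ≤ _ := by rw [mul_one]; exact this
  set T := ∑ i ∈ Finset.range m, (ee k (i + 1 + 1) : ℂ) * z ^ (2 * (i + 1 + 1) + 1)
  have e0 := ee0_bd k hk
  have e1 := ee1_bd k hk
  have eL : |LL (2 * k - 1) - 1| ≤ 0.002 := by
    have a := LL_bd 1 (2 * k - 1) (by omega)
    have b := one_le_LL (s := 2 * k - 1) (by omega)
    rw [abs_le]; norm_num at a ⊢; constructor <;> linarith
  obtain ⟨p1, p2⟩ := pi_inv_bd
  set f0 : ℂ := 1 - (1.57 : ℝ) * z + z ^ 2 - (0.27 : ℝ) * z ^ 3 with hf0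
  have herr : f0 = -(((LL (2 * k - 1) - 1 : ℝ) : ℂ) * 1 + ((LL (2 * k - 1) - 1 : ℝ) : ℂ) * z ^ 2
      + ((4 / Real.pi * ee k 0 + 1.57 : ℝ) : ℂ) * z ^ 1
      + ((4 / Real.pi * ee k 1 + 0.27 : ℝ) : ℂ) * z ^ 3 + ((4 / Real.pi : ℝ) : ℂ) * T) := by
    rw [hf0]
    simp only [zero_add, mul_zero, mul_one] at h0
    push_cast at h0 ⊢
    linear_combination h0
  have hb : ∀ (x c : ℝ) (w : ℂ), |x| ≤ c → ‖w‖ ≤ 1 → ‖(x : ℂ) * w‖ ≤ c := by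
    intro x c w hx hw
    rw [norm_mul, Complex.norm_real, Real.norm_eq_abs]
    calc |x| * ‖w‖ ≤ c * 1 := by gcongr; exact (abs_nonneg x).trans hx
      _ = c := mul_one c
  have hT : ‖((4 / Real.pi : ℝ) : ℂ) * T‖ ≤ 1.2734 * 0.034 := by
    rw [norm_mul, Complex.norm_real, Real.norm_eq_abs, abs_of_pos (by positivity)]
    gcongr
  have hf : ‖f0‖ ≤ 0.1 := by
    rw [herr, norm_neg]
    have n1 := hb _ _ 1 eL (by simp)
    have n2 := hb _ _ _ eL (hp 2)
    have n3 := hb _ _ _ e0 (hp 1)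
    have n4 := hb _ _ _ e1 (hp 3)
    refine (norm_add_le_of_le (norm_add_le_of_le (norm_add_le_of_le (norm_add_le_of_le n1 n2) n3) n4) hT).trans ?_
    norm_num
  set g : ℂ := (1 : ℝ) * z ^ 0 + (1.57 : ℝ) * z ^ 1 + (1.46 : ℝ) * z ^ 2 + (1 : ℝ) * z ^ 3 + (0.53 : ℝ) * z ^ 4
    + (0.22 : ℝ) * z ^ 5 with hg
  have hb' : ∀ (x : ℝ) (n : ℕ), ‖(x : ℂ) * z ^ n‖ ≤ |x| := fun x n => hb x _ _ le_rfl (hp n)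
  have hgb : ‖g‖ ≤ 6 := by
    refine (norm_add_le_of_le (norm_add_le_of_le (norm_add_le_of_le (norm_add_le_of_le (norm_add_le_of_le
      (hb' _ _) (hb' _ _)) (hb' _ _)) (hb' _ _)) (hb' _ _)) (hb' _ _)).trans ?_
    norm_num [abs_of_pos]
  have hid : (1 : ℂ) = f0 * g + ((0.0049 : ℝ) * z ^ 2 + (-0.0078 : ℝ) * z ^ 3 + (0.0039 : ℝ) * z ^ 4
      + (0.0063 : ℝ) * z ^ 5 + (0.0854 : ℝ) * z ^ 6 + (-0.0769 : ℝ) * z ^ 7 + (0.0594 : ℝ) * z ^ 8) := by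
    rw [hf0, hg]; push_cast; ring
  have hfin : ‖(1 : ℂ)‖ ≤ 0.1 * 6 + 0.3 := by
    rw [hid]
    refine norm_add_le_of_le ?_ ?_
    · rw [norm_mul]; gcongr
    · refine (norm_add_le_of_le (norm_add_le_of_le (norm_add_le_of_le (norm_add_le_of_le (norm_add_le_of_le
        (norm_add_le_of_le (hb' _ _) (hb' _ _)) (hb' _ _)) (hb' _ _)) (hb' _ _)) (hb' _ _)) (hb' _ _)).trans ?_
      norm_num [abs_of_pos]
  norm_num at hfin

open Polynomial in
lemma case_ge4 (k : ℕ) (hk : 4 ≤ k) (z : ℂ) (hz0 : z ≠ 0) (hz : (Qpoly k).eval z = 0) :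
    ‖z‖ = 1 ∧ (Qpoly k).derivative.eval z ≠ 0 := by
  refine core (hh k) (2 * k) (hh_deg k (by omega)) ((-1) ^ k) (neg_one_pow_eq_or ℂ k) ?_ (Qpoly k)
    (1 + X ^ 2) (C ((-1) ^ k * 2 ^ (2 * k - 1)) * X) ?_ ?_ z hz0 hz
  · intro w hw
    by_contra h
    exact hh_nonzero k hk w (not_lt.1 h) hw
  · intro w hw; simp [hw]
  · intro w hw
    have := main_rel k (by omega) w hw
    simpa using this

open Polynomial in
lemma quad (l b : ℝ) (hb : |b| < 2 * l) (z : ℂ) (hz : (l : ℂ) * (1 + z ^ 2) - b * z = 0) :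
    ‖z‖ = 1 ∧ (l : ℂ) * (2 * z) - b ≠ 0 := by
  have hl : 0 < l := by have := abs_nonneg b; linarith
  have hz0 : z ≠ 0 := by
    rintro rfl
    simp at hz
    linarith
  have := core (C l + C (-b / 2) * X) 2 (by
      refine lt_of_le_of_lt (b := 1) ?_ (by norm_num)
      exact natDegree_add_le_of_degree_le (by simp) ((natDegree_C_mul_le _ _).trans (by simp))) 1 (Or.inl rfl)
    ?_ (C (l : ℂ) * (1 + X ^ 2) - C (b : ℂ) * X) 1 1 ?_ ?_ z hz0 ?_
  · refine ⟨this.1, ?_⟩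
    simpa [one_add_one_eq_two] using this.2
  · intro w hw
    rw [eval_map_algebraMap] at hw
    simp at hw
    by_contra hc
    push Not at hc
    have h1 : (l : ℂ) = ((b / 2 : ℝ) : ℂ) * w := by push_cast; linear_combination hw
    have h2 := congrArg norm h1
    rw [norm_mul, Complex.norm_real, Complex.norm_real, Real.norm_eq_abs, Real.norm_eq_abs,
      abs_of_pos hl, abs_div, abs_two] at h2
    nlinarith [norm_nonneg w, abs_nonneg b]
  · intro w _; simp
  · intro w hw
    rw [eval_map_algebraMap, eval_map_algebraMap]
    simp
    field_simp
    ring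
  · simpa using hz

lemma case2 (z : ℂ) (hz0 : z ≠ 0) (hz : (Qpoly 2).eval z = 0) :
    ‖z‖ = 1 ∧ (Qpoly 2).derivative.eval z ≠ 0 := by
  have hQ : ∀ w, (Qpoly 2).eval w = 8 * w * ((LL 3 : ℂ) * (1 + w ^ 2) -
      ((4 / Real.pi * (LL 2 * LL 2) : ℝ) : ℂ) * w) := by
    intro w
    rw [Q_eval 2 le_rfl]
    simp [Finset.sum_range_succ, AA]
    ring
  have hb : |4 / Real.pi * (LL 2 * LL 2)| < 2 * LL 3 := by
    have h3 := one_le_LL (s := 3) (by norm_num)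
    rw [LL_two, abs_of_pos (by positivity)]
    have e : 4 / Real.pi * (Real.pi ^ 2 / 8 * (Real.pi ^ 2 / 8)) = Real.pi ^ 3 / 16 := by
      have := Real.pi_ne_zero; field_simp; norm_num
    rw [e]
    have h2 := Real.pi_lt_d4
    have : Real.pi ^ 3 ≤ 3.1416 ^ 3 := by gcongr
    norm_num at this
    linarith
  generalize (4 / Real.pi * (LL 2 * LL 2)) = b at *
  have hs : (LL 3 : ℂ) * (1 + z ^ 2) - b * z = 0 := by
    rw [hQ] at hz
    exact (mul_eq_zero.1 hz).resolve_left (by simp [hz0])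
  obtain ⟨q1, q2⟩ := quad _ _ hb z hs
  refine ⟨q1, ?_⟩
  have hpoly : Qpoly 2 = Polynomial.C 8 * Polynomial.X * (Polynomial.C (LL 3 : ℂ) * (1 + Polynomial.X ^ 2)
      - Polynomial.C (b : ℂ) * Polynomial.X) := by
    apply Polynomial.funext; intro w; rw [hQ]; simp
  rw [hpoly]
  simp [hs, hz0]
  intro h; apply q2; linear_combination h

lemma case3 (z : ℂ) (hz0 : z ≠ 0) (hz : (Qpoly 3).eval z = 0) :
    ‖z‖ = 1 ∧ (Qpoly 3).derivative.eval z ≠ 0 := by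
  have hQ : ∀ w, (Qpoly 3).eval w = -32 * w * (1 - w ^ 2) * ((LL 5 : ℂ) * (1 + w ^ 2) -
      ((4 / Real.pi * (LL 2 * LL 4) : ℝ) : ℂ) * w) := by
    intro w
    rw [Q_eval 3 (by norm_num)]
    simp [Finset.sum_range_succ, AA]
    ring
  have hb : |4 / Real.pi * (LL 2 * LL 4)| < 2 * LL 5 := by
    have h3 := one_le_LL (s := 5) (by norm_num)
    have h4 := LL4_bd
    have h4' := one_le_LL (s := 4) (by norm_num)
    rw [LL_two, abs_of_pos (by positivity)]
    have e : 4 / Real.pi * (Real.pi ^ 2 / 8 * LL 4) = Real.pi / 2 * LL 4 := by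
      have := Real.pi_ne_zero; field_simp; norm_num
    rw [e]
    have h2 := Real.pi_lt_d4
    nlinarith
  generalize (4 / Real.pi * (LL 2 * LL 4)) = b at *
  have hpoly : Qpoly 3 = Polynomial.C (-32) * Polynomial.X * (1 - Polynomial.X ^ 2) *
      (Polynomial.C (LL 5 : ℂ) * (1 + Polynomial.X ^ 2) - Polynomial.C (b : ℂ) * Polynomial.X) := by
    apply Polynomial.funext; intro w; rw [hQ]; simp
  have hd : (Qpoly 3).derivative.eval z = -32 * (1 - 3 * z ^ 2) * ((LL 5 : ℂ) * (1 + z ^ 2) - b * z)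
      + -32 * z * (1 - z ^ 2) * ((LL 5 : ℂ) * (2 * z) - b) := by
    rw [hpoly]; simp; ring
  rw [hQ] at hz
  rw [hd]
  by_cases h1 : (1 - z ^ 2) = 0
  · have hz1 : ‖z‖ = 1 := by
      have : ‖z‖ ^ 2 = 1 := by
        rw [← norm_pow, ← sub_eq_zero.1 h1]; simp
      exact (pow_eq_one_iff_of_nonneg (norm_nonneg _) (by norm_num)).1 this
    refine ⟨hz1, ?_⟩
    have hz2 : z ^ 2 = 1 := (sub_eq_zero.1 h1).symm
    intro h
    rw [h1, hz2] at h
    have h' : ((2 * LL 5 : ℝ) : ℂ) = b * z := by push_cast; linear_combination h / 64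
    have h2 := congrArg norm h'
    have h3 := one_le_LL (s := 5) (by norm_num)
    rw [norm_mul, hz1, Complex.norm_real, Complex.norm_real, Real.norm_eq_abs, Real.norm_eq_abs,
      abs_of_pos (by linarith)] at h2
    linarith
  · have hs : (LL 5 : ℂ) * (1 + z ^ 2) - b * z = 0 :=
      (mul_eq_zero.1 hz).resolve_left (by simp [hz0, h1])
    obtain ⟨q1, q2⟩ := quad _ _ hb z hs
    refine ⟨q1, ?_⟩
    rw [hs, mul_zero, zero_add]
    exact mul_ne_zero (mul_ne_zero (mul_ne_zero (by norm_num) hz0) h1) q2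

/-- Every non-zero complex root of `Q_k` lies on the unit circle,
and all roots of `Q_k` are simple. -/
theorem Qpoly_roots_on_unit_circle_and_simple (k : ℕ) (hk : 2 ≤ k) :
    (∀ z : ℂ, (Qpoly k).IsRoot z → z ≠ 0 → ‖z‖ = 1) ∧
    (∀ z : ℂ, (Qpoly k).IsRoot z → Polynomial.rootMultiplicity z (Qpoly k) = 1) := by
  have key : ∀ z : ℂ, z ≠ 0 → (Qpoly k).eval z = 0 →
      ‖z‖ = 1 ∧ (Qpoly k).derivative.eval z ≠ 0 := by
    intro z h0 h
    rcases (by omega : k = 2 ∨ k = 3 ∨ 4 ≤ k) with rfl | rfl | h4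
    · exact case2 z h0 h
    · exact case3 z h0 h
    · exact case_ge4 k h4 z h0 h
  have hd0 := Q_deriv_zero k hk
  have hne : Qpoly k ≠ 0 := by
    intro h; rw [h] at hd0; simp at hd0
  refine ⟨fun z hz h0 => (key z h0 hz).1, ?_⟩
  intro z hz
  have hpos := (Polynomial.rootMultiplicity_pos hne).2 hz
  have hnot : ¬ 1 < Polynomial.rootMultiplicity z (Qpoly k) := by
    rw [Polynomial.one_lt_rootMultiplicity_iff_isRoot hne]
    rintro ⟨_, h⟩
    by_cases h0 : z = 0
    · rw [h0] at h; exact hd0 h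
    · exact (key z h0 hz).2 h
  omega
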